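/- arXiv:2205.01229 — 5 statements merged into one kernel-verified Lean document; each statement's English description precedes it below -/
import Mathlib

section
/- Let S be a finite set equipped with a strict linear order ≺, and let p, c : S → ℝ with p_k ≥ 0 for all k ∈ S. If for every k ∈ S we have c_k ≥ p_k + Σ_{k' ∈ S, k' ≺ k} p_{k'}, then Σ_{k∈S} c_k·p_k ≥ (1/2)·Σ_{k∈S} p_k² + (1/2)·(Σ_{k∈S} p_k)². -/
/-- If every element's completion time is at least its own processing time plus the
processing times of all strictly preceding elements, then
`∑ c_k p_k ≥ (1/2) ∑ p_k² + (1/2) (∑ p_k)²`. -/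
theorem sum_completion_mul_proc_ge {α : Type*} [LinearOrder α]
    (S : Finset α) (p c : α → ℝ)
    (hp : ∀ k ∈ S, 0 ≤ p k)
    (hc : ∀ k ∈ S, p k + ∑ k' ∈ S.filter (fun k' => k' < k), p k' ≤ c k) :
    (1 / 2) * ∑ k ∈ S, (p k) ^ 2 + (1 / 2) * (∑ k ∈ S, p k) ^ 2
      ≤ ∑ k ∈ S, c k * p k := by
  induction S using Finset.induction_on_max with
  | empty => simp
  | insert a s ha ih =>
    have hna : a ∉ s := fun h => lt_irrefl a (ha a h)
    have h1 := ih (fun k hk => hp k (Finset.mem_insert_of_mem hk)) (by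
      intro k hk
      have h := hc k (Finset.mem_insert_of_mem hk)
      rwa [Finset.filter_insert, if_neg (ha k hk).not_gt] at h)
    have h2 := hc a (Finset.mem_insert_self a s)
    rw [Finset.filter_insert, if_neg (lt_irrefl a), Finset.filter_true_of_mem ha] at h2
    have h3 := mul_le_mul_of_nonneg_right h2 (hp a (Finset.mem_insert_self a s))
    rw [Finset.sum_insert hna, Finset.sum_insert hna, Finset.sum_insert hna]
    nlinarith
end

section
/- Let C be a finite set of coflows with a strict linear order ≺ (the scheduling priority), acceptance indicators z : C → {0,1}, processing times p : C → ℝ with p_k ≥ 0, completion times c : C → ℝ, and deadlines T : C → ℝ. Assume that for every k ∈ C, c_k ≥ p_k + Σ_{k' ∈ C, k' ≺ k} p_{k'}·z_{k'}, and that every accepted coflow meets its deadline, i.e. z_k = 1 implies c_k ≤ T_k. Then for every subset S ⊆ {k ∈ C : z_k = 1} of accepted coflows, Σ_{k∈S} p_k·T_k ≥ f(S). -/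
/-- `f(S) := (1/2)·∑_{k∈S} p_k² + (1/2)·(∑_{k∈S} p_k)²`. -/
noncomputable def f {α : Type*} (S : Finset α) (p : α → ℝ) : ℝ :=
  (1 / 2) * ∑ k ∈ S, (p k) ^ 2 + (1 / 2) * (∑ k ∈ S, p k) ^ 2

/-- **Parallel inequalities for accepted coflows.** If each coflow's completion time
is at least its own processing time plus the processing times of higher-priority
*accepted* coflows, and every accepted coflow meets its deadline, then every subset
`S` of accepted coflows satisfies `∑_{k∈S} p_k T_k ≥ f(S)`. -/
theorem parallel_inequalities_accepted {α : Type*} [LinearOrder α]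
    (C : Finset α) (z p c T : α → ℝ)
    (hz : ∀ k ∈ C, z k = 0 ∨ z k = 1)
    (hp : ∀ k ∈ C, 0 ≤ p k)
    (hc : ∀ k ∈ C, p k + ∑ k' ∈ C.filter (fun k' => k' < k), p k' * z k' ≤ c k)
    (hmeet : ∀ k ∈ C, z k = 1 → c k ≤ T k) :
    ∀ S ⊆ C.filter (fun k => z k = 1), f S p ≤ ∑ k ∈ S, p k * T k := by
  intro S
  induction S using Finset.induction_on_max with
  | empty => intro _; simp [f]
  | insert a s hlt ih =>
    intro hS
    have ha : a ∉ s := fun h => lt_irrefl _ (hlt a h)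
    have hs := ih (fun x hx => hS (Finset.mem_insert_of_mem hx))
    have haC := Finset.mem_filter.1 (hS (Finset.mem_insert_self a s))
    have hle : ∑ k ∈ s, p k ≤ ∑ k' ∈ C.filter (fun k' => k' < a), p k' * z k' := by
      have h1 : ∑ k ∈ s, p k = ∑ k ∈ s, p k * z k := by
        refine Finset.sum_congr rfl fun k hk => ?_
        rw [(Finset.mem_filter.1 (hS (Finset.mem_insert_of_mem hk))).2, mul_one]
      rw [h1]
      refine Finset.sum_le_sum_of_subset_of_nonneg (fun k hk => ?_) (fun k hk _ => ?_)
      · exact Finset.mem_filter.2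
          ⟨(Finset.mem_filter.1 (hS (Finset.mem_insert_of_mem hk))).1, hlt k hk⟩
      · have hkC := (Finset.mem_filter.1 hk).1
        have h0 := hp k hkC
        rcases hz k hkC with h | h <;> rw [h] <;> linarith
    have hT : p a + ∑ k ∈ s, p k ≤ T a := by
      linarith [hc a haC.1, hmeet a haC.1 haC.2]
    have hm := mul_le_mul_of_nonneg_left hT (hp a haC.1)
    unfold f at hs ⊢
    rw [Finset.sum_insert ha, Finset.sum_insert ha, Finset.sum_insert ha]
    nlinarith [hm, hs]
end

section
/- Let S be a finite set, p, T : S → ℝ, and for k' ∈ S define the removal slack g(k') := f(S \ {k'}) − Σ_{k ∈ S \ {k'}} p_k·T_k and the score Ψ_{k'} := p_{k'}·(T_{k'} − Σ_{k∈S} p_k). Then for all k₁, k₂ ∈ S, g(k₁) ≤ g(k₂) if and only if Ψ_{k₁} ≤ Ψ_{k₂}; in particular, a coflow minimizing Ψ over S also minimizes the removal slack g over S. -/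
/-- Minimizing the score `Ψ_{k'} = p_{k'}(T_{k'} − ∑_{k∈S} p_k)` over `S` is the same
as minimizing the removal slack `g(k') = f(S∖{k'}) − ∑_{k∈S∖{k'}} p_k T_k`:
the two orders agree, and in particular a minimizer of `Ψ` minimizes `g`. -/
theorem score_order_iff_removal_slack_order {α : Type*} [DecidableEq α]
    (S : Finset α) (p T : α → ℝ) (g Ψ : α → ℝ)
    (hg : ∀ k' ∈ S, g k' = f (S.erase k') p - ∑ k ∈ S.erase k', p k * T k)
    (hΨ : ∀ k' ∈ S, Ψ k' = p k' * (T k' - ∑ k ∈ S, p k)) :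
    (∀ k₁ ∈ S, ∀ k₂ ∈ S, (g k₁ ≤ g k₂ ↔ Ψ k₁ ≤ Ψ k₂)) ∧
    (∀ k' ∈ S, (∀ k ∈ S, Ψ k' ≤ Ψ k) → ∀ k ∈ S, g k' ≤ g k) := by
  have key : ∀ k ∈ S, g k = (f S p - ∑ j ∈ S, p j * T j) + Ψ k := by
    intro k hk
    have h1 := Finset.add_sum_erase S (fun j => (p j) ^ 2) hk
    have h2 := Finset.add_sum_erase S p hk
    have h3 := Finset.add_sum_erase S (fun j => p j * T j) hk
    rw [hg k hk, hΨ k hk, f, f, ← h1, ← h2, ← h3]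
    ring
  have order : ∀ k₁ ∈ S, ∀ k₂ ∈ S, (g k₁ ≤ g k₂ ↔ Ψ k₁ ≤ Ψ k₂) := by
    intro k₁ h₁ k₂ h₂
    rw [key k₁ h₁, key k₂ h₂, add_le_add_iff_left]
  exact ⟨order, fun k' hk' h k hk => (order k' hk' k hk).2 (h k hk)⟩
end

section
/- Fix an integer M ≥ 2 and a real ε > 0. Consider M coflows indexed 1,…,M and M − 1 ports of unit capacity indexed 1,…,M−1, with processing times p_{ℓ,1} = 1 for every port ℓ (coflow 1 uses all ports), p_{ℓ,i} = 1 + ε if ℓ = i − 1 and p_{ℓ,i} = 0 otherwise for i = 2,…,M (so coflows 2,…,M each use exactly one distinct port), deadline T_1 = 1 and T_i = 2 for i = 2,…,M. In the sequential-port model, under the priority order that schedules coflow 1 first (before all other coflows), coflow 1 has completion time 1 ≤ T_1, while every coflow i ∈ {2,…,M} has completion time 2 + ε > T_i; hence exactly 1 out of the M coflows meets its deadline, i.e., the coflow acceptance rate is 1/M. -/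
/-- **Worst-case example, coflow 1 scheduled first.** With `M` coflows and `M − 1`
unit-capacity ports, coflow `1` using every port with processing time `1` and
deadline `1`, and each coflow `i ∈ {2,…,M}` using only port `i − 1` with processing
time `1 + ε` and deadline `2`: in the sequential-port model, under any priority
order that schedules coflow `1` first, coflow `1` has completion time `1 ≤ T 1`,
every coflow `i ∈ {2,…,M}` has completion time `2 + ε > T i`, exactly one coflow
meets its deadline, and the coflow acceptance rate is `1 / M`. -/
theorem csmha_worst_case_coflow_one_first
    (M : ℕ) (hM : 2 ≤ M) (ε : ℝ) (hε : 0 < ε)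
    (p : ℕ → ℕ → ℝ) (T : ℕ → ℝ)
    (hp1 : ∀ ℓ ∈ Finset.Icc 1 (M - 1), p ℓ 1 = 1)
    (hpi : ∀ ℓ ∈ Finset.Icc 1 (M - 1), ∀ i ∈ Finset.Icc 2 M,
      p ℓ i = if ℓ = i - 1 then 1 + ε else 0)
    (hT1 : T 1 = 1) (hTi : ∀ i ∈ Finset.Icc 2 M, T i = 2)
    (rank : ℕ → ℕ) (hrank : Set.InjOn rank (Set.Icc 1 M))
    (hfirst : ∀ i ∈ Finset.Icc 2 M, rank 1 < rank i)
    (ct : ℕ → ℝ)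
    (hct : ∀ k ∈ Finset.Icc 1 M,
      ct k = sSup {x : ℝ | ∃ ℓ ∈ Finset.Icc 1 (M - 1), 0 < p ℓ k ∧
        x = ∑ k' ∈ (Finset.Icc 1 M).filter (fun k' => rank k' ≤ rank k), p ℓ k'}) :
    ct 1 = 1 ∧ ct 1 ≤ T 1 ∧
    (∀ i ∈ Finset.Icc 2 M, ct i = 2 + ε ∧ T i < ct i) ∧
    ((Finset.Icc 1 M).filter (fun k => ct k ≤ T k)).card = 1 ∧
    ((((Finset.Icc 1 M).filter (fun k => ct k ≤ T k)).card : ℝ)) / M = 1 / M := by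
  have h1 : ct 1 = 1 := by
    rw [hct 1 (Finset.mem_Icc.2 ⟨le_refl 1, by omega⟩)]
    have hf : (Finset.Icc 1 M).filter (fun k' => rank k' ≤ rank 1) = {1} := by
      ext k
      simp only [Finset.mem_filter, Finset.mem_Icc, Finset.mem_singleton]
      constructor
      · rintro ⟨⟨ha, hb⟩, hc⟩
        by_contra hne
        have := hfirst k (Finset.mem_Icc.2 ⟨by omega, hb⟩)
        omega
      · rintro rfl
        exact ⟨⟨le_refl _, by omega⟩, le_refl _⟩
    have hs : {x : ℝ | ∃ ℓ ∈ Finset.Icc 1 (M - 1), 0 < p ℓ 1 ∧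
        x = ∑ k' ∈ (Finset.Icc 1 M).filter (fun k' => rank k' ≤ rank 1), p ℓ k'} = {1} := by
      ext x
      simp only [Set.mem_setOf_eq, Set.mem_singleton_iff, hf, Finset.sum_singleton]
      constructor
      · rintro ⟨l, hl, -, rfl⟩
        exact hp1 l hl
      · rintro rfl
        have hl : 1 ∈ Finset.Icc 1 (M - 1) := Finset.mem_Icc.2 ⟨le_refl 1, by omega⟩
        refine ⟨1, hl, ?_, ?_⟩ <;> rw [hp1 1 hl]
        norm_num
    rw [hs, csSup_singleton]
  have h2 : ∀ i ∈ Finset.Icc 2 M, ct i = 2 + ε := by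
    intro i hi
    have hi' := Finset.mem_Icc.1 hi
    have hl : i - 1 ∈ Finset.Icc 1 (M - 1) := Finset.mem_Icc.2 ⟨by omega, by omega⟩
    have hpp : p (i - 1) i = 1 + ε := by rw [hpi _ hl i hi, if_pos rfl]
    have hsum : ∑ k' ∈ (Finset.Icc 1 M).filter (fun k' => rank k' ≤ rank i), p (i - 1) k'
        = 2 + ε := by
      have hsub : ({1, i} : Finset ℕ) ⊆
          (Finset.Icc 1 M).filter (fun k' => rank k' ≤ rank i) := by
        intro k hk
        simp only [Finset.mem_insert, Finset.mem_singleton] at hk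
        simp only [Finset.mem_filter, Finset.mem_Icc]
        rcases hk with rfl | rfl
        · exact ⟨⟨le_refl _, by omega⟩, (hfirst i hi).le⟩
        · exact ⟨⟨by omega, by omega⟩, le_refl _⟩
      rw [← Finset.sum_subset hsub, Finset.sum_pair (by omega), hp1 _ hl, hpp]
      · ring
      · intro k hk hk'
        simp only [Finset.mem_insert, Finset.mem_singleton, not_or] at hk'
        simp only [Finset.mem_filter, Finset.mem_Icc] at hk
        rw [hpi _ hl k (Finset.mem_Icc.2 ⟨by omega, by omega⟩), if_neg (by omega)]
    rw [hct i (Finset.mem_Icc.2 ⟨by omega, by omega⟩)]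
    have hs : {x : ℝ | ∃ ℓ ∈ Finset.Icc 1 (M - 1), 0 < p ℓ i ∧
        x = ∑ k' ∈ (Finset.Icc 1 M).filter (fun k' => rank k' ≤ rank i), p ℓ k'}
        = {2 + ε} := by
      ext x
      simp only [Set.mem_setOf_eq, Set.mem_singleton_iff]
      constructor
      · rintro ⟨l, hl', hpos, rfl⟩
        have : l = i - 1 := by
          by_contra hne
          rw [hpi l hl' i hi, if_neg hne] at hpos
          exact lt_irrefl _ hpos
        rw [this, hsum]
      · rintro rfl
        exact ⟨i - 1, hl, by rw [hpp]; linarith, hsum.symm⟩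
    rw [hs, csSup_singleton]
  have hlt : ∀ i ∈ Finset.Icc 2 M, T i < ct i := by
    intro i hi
    rw [h2 i hi, hTi i hi]
    linarith
  have hcard : ((Finset.Icc 1 M).filter (fun k => ct k ≤ T k)).card = 1 := by
    rw [Finset.card_eq_one]
    refine ⟨1, ?_⟩
    ext k
    simp only [Finset.mem_filter, Finset.mem_Icc, Finset.mem_singleton]
    constructor
    · rintro ⟨⟨ha, hb⟩, hc⟩
      by_contra hne
      exact absurd hc (not_le.2 (hlt k (Finset.mem_Icc.2 ⟨by omega, hb⟩)))
    · rintro rfl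
      exact ⟨⟨le_refl _, by omega⟩, by rw [h1, hT1]⟩
  refine ⟨h1, by rw [h1, hT1], fun i hi => ⟨h2 i hi, hlt i hi⟩, hcard, ?_⟩
  rw [hcard, Nat.cast_one]
end

section
/- Let C be a finite set of coflows with a strict linear order ≺, acceptance indicators z : C → {0,1}, processing times p : C → ℝ with p_k ≥ 0, completion times c : C → ℝ, and deadlines T : C → ℝ, such that c_k ≥ p_k + Σ_{k' ≺ k} p_{k'}·z_{k'} for all k ∈ C. If there exists a subset S ⊆ {k ∈ C : z_k = 1} with Σ_{k∈S} p_k·T_k < f(S), then at least one accepted coflow misses its deadline, i.e., there exists k ∈ C with z_k = 1 and c_k > T_k. -/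
theorem f_eq_sum_prefix {α : Type*} [LinearOrder α] (p : α → ℝ) (S : Finset α) :
    f S p = ∑ k ∈ S, p k * (p k + ∑ k' ∈ S.filter (fun k' => k' < k), p k') := by
  induction S using Finset.induction_on_max with
  | empty => simp [f]
  | insert a s ha ih =>
    have hns : a ∉ s := fun h => lt_irrefl _ (ha a h)
    have h1 : (insert a s).filter (fun k' => k' < a) = s := by
      ext x
      simp only [Finset.mem_filter, Finset.mem_insert]
      constructor
      · rintro ⟨rfl | h, h2⟩
        · exact absurd h2 (lt_irrefl _)
        · exact h
      · exact fun h => ⟨Or.inr h, ha x h⟩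
    have h2 : ∀ k ∈ s, p k * (p k + ∑ k' ∈ (insert a s).filter (fun k' => k' < k), p k')
        = p k * (p k + ∑ k' ∈ s.filter (fun k' => k' < k), p k') := by
      intro k hk
      rw [Finset.filter_insert, if_neg (not_lt.mpr (ha k hk).le)]
    rw [Finset.sum_insert hns, h1, Finset.sum_congr rfl h2, ← ih]
    simp only [f, Finset.sum_insert hns]
    ring

/-- If some subset `S` of accepted coflows violates the parallel inequality
`∑_{k∈S} p_k T_k ≥ f(S)`, then at least one accepted coflow misses its deadline. -/
theorem violated_parallel_inequality_implies_missed_deadline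
    {α : Type*} [LinearOrder α]
    (C : Finset α) (z p c T : α → ℝ)
    (hz : ∀ k ∈ C, z k = 0 ∨ z k = 1)
    (hp : ∀ k ∈ C, 0 ≤ p k)
    (hc : ∀ k ∈ C, p k + ∑ k' ∈ C.filter (fun k' => k' < k), p k' * z k' ≤ c k)
    (S : Finset α) (hS : S ⊆ C.filter (fun k => z k = 1))
    (hviol : ∑ k ∈ S, p k * T k < f S p) :
    ∃ k ∈ C, z k = 1 ∧ T k < c k := by
  by_contra! hcon
  apply absurd hviol
  rw [not_lt, f_eq_sum_prefix]
  apply Finset.sum_le_sum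
  intro k hk
  obtain ⟨hkC, hkz⟩ := Finset.mem_filter.mp (hS hk)
  apply mul_le_mul_of_nonneg_left _ (hp k hkC)
  refine le_trans ?_ ((hc k hkC).trans (hcon k hkC hkz))
  have h1 : ∑ k' ∈ S.filter (fun k' => k' < k), p k'
      = ∑ k' ∈ S.filter (fun k' => k' < k), p k' * z k' := by
    apply Finset.sum_congr rfl
    intro x hx
    rw [(Finset.mem_filter.mp (hS (Finset.mem_filter.mp hx).1)).2, mul_one]
  rw [h1]
  have h2 : ∑ k' ∈ S.filter (fun k' => k' < k), p k' * z k'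
      ≤ ∑ k' ∈ C.filter (fun k' => k' < k), p k' * z k' := by
    apply Finset.sum_le_sum_of_subset_of_nonneg
    · exact Finset.filter_subset_filter _ (hS.trans (Finset.filter_subset _ _))
    · intro i hi _
      have hiC := (Finset.mem_filter.mp hi).1
      rcases hz i hiC with h | h <;> simp [h, hp i hiC]
  linarith
end
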